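/- Let m ≥ 3 be an integer with an odd factor and let ε = (ε_1,…,ε_m) ∈ {±1}^m satisfy ∑_{j=1}^m ε_j·e^{ijπ/m} = 0. For j = 1,…,m define a_j = (cos(jπ/(2m)), sin(jπ/(2m))) if ε_j = 1, and a_j = (cos(jπ/(2m) + π/2), sin(jπ/(2m) + π/2)) if ε_j = −1. Then the matrix A = [a_1,…,a_m]ᵀ ∈ ℝ^{m×2} has minimal condition number: β_A = min{β_M : M ∈ ℝ^{m×2}} = (1 − 1/(m·sin(π/(2m))))^{−1/2}. -/

import Mathlib

noncomputable section

open Real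
open scoped RealInnerProductSpace ENNReal

/-- ℝ² as a Euclidean space. -/
abbrev E2 : Type := EuclideanSpace ℝ (Fin 2)

/-- The vector `(x, y)` in ℝ². -/
def vec2 (x y : ℝ) : E2 := (WithLp.equiv 2 (Fin 2 → ℝ)).symm ![x, y]

/-- The coordinates of a vector in ℝ². -/
def toFun2 (v : E2) : Fin 2 → ℝ := WithLp.equiv 2 (Fin 2 → ℝ) v

/-- The phaseless measurement map `Φ_A(x) = (|⟨a_j, x⟩|)_j`. -/
def PhiMap {m : ℕ} (a : Fin m → E2) (x : E2) : EuclideanSpace ℝ (Fin m) :=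
  (WithLp.equiv 2 (Fin m → ℝ)).symm fun j => |⟪a j, x⟫|

/-- The distance `dist(x,y) = min ‖x − y‖ ‖x + y‖` (real phase retrieval distance). -/
def pdist (x y : E2) : ℝ := min ‖x - y‖ ‖x + y‖

/-- The set of Lipschitz ratios of the phaseless measurement map. -/
def ratioSet {m : ℕ} (a : Fin m → E2) : Set ℝ :=
  {r | ∃ x y : E2, pdist x y ≠ 0 ∧ r = ‖PhiMap a x - PhiMap a y‖ / pdist x y}

/-- The optimal lower Lipschitz constant `L_A`. -/
def lipL {m : ℕ} (a : Fin m → E2) : ℝ := sInf (ratioSet a)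

/-- The optimal upper Lipschitz constant `U_A`. -/
def lipU {m : ℕ} (a : Fin m → E2) : ℝ := sSup (ratioSet a)

/-- The condition number `β_A = U_A / L_A`, with `β_A = +∞` when `L_A = 0`. -/
def condNum {m : ℕ} (a : Fin m → E2) : ℝ≥0∞ :=
  if lipL a = 0 then ⊤ else ENNReal.ofReal (lipU a / lipL a)

/-- An edge family: nonzero vectors with pairwise distinct directions summing to zero
(the edge vectors of a strictly convex polygon). -/
def IsEdgeFamily {m : ℕ} (e : Fin m → E2) : Prop :=
  (∀ j, e j ≠ 0) ∧
  (∀ i j : Fin m, i ≠ j → ‖e i‖⁻¹ • e i ≠ ‖e j‖⁻¹ • e j) ∧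
  ∑ j, e j = 0

/-- The diameter-to-perimeter ratio of the polygon with edge vectors `e`. -/
def rRatio {m : ℕ} (e : Fin m → E2) : ℝ :=
  sSup {s | ∃ u : E2, ‖u‖ = 1 ∧ s = ∑ j, |⟪e j, u⟫|} / (2 * ∑ j, ‖e j‖)

/-- An optimal edge family: minimizes `rRatio` among all edge families of size `m`. -/
def IsOptimalEdgeFamily {m : ℕ} (e : Fin m → E2) : Prop :=
  IsEdgeFamily e ∧ ∀ e' : Fin m → E2, IsEdgeFamily e' → rRatio e ≤ rRatio e'

/-- The complex square map on ℝ² ≅ ℂ: `f(t·(cos φ, sin φ)) = t²·(cos 2φ, sin 2φ)`. -/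
def csq (v : E2) : E2 :=
  vec2 (toFun2 v 0 ^ 2 - toFun2 v 1 ^ 2) (2 * toFun2 v 0 * toFun2 v 1)

/-- The harmonic frame `E_m`: the `j`-th row is `(cos((j−1)π/m), sin((j−1)π/m))`, `j = 1,…,m`. -/
def harmonicFrame (m : ℕ) : Fin m → E2 :=
  fun j => vec2 (Real.cos ((j : ℕ) * π / m)) (Real.sin ((j : ℕ) * π / m))



theorem abs_sub_abs_sq (p q : ℝ) : (|p| - |q|) ^ 2 = min ((p + q) ^ 2) ((p - q) ^ 2) := by
  have h1 : (|p| - |q|) ^ 2 = p ^ 2 + q ^ 2 - 2 * |p * q| := by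
    rw [abs_mul]; nlinarith [sq_abs p, sq_abs q]
  rw [h1]
  rcases le_total 0 (p * q) with h | h
  · rw [abs_of_nonneg h, min_eq_right (by nlinarith)]; ring
  · rw [abs_of_nonpos h, min_eq_left (by nlinarith)]; ring

theorem phi_sq {m : ℕ} (a : Fin m → E2) (x y : E2) :
    ‖PhiMap a x - PhiMap a y‖ ^ 2 = ∑ j, min (⟪a j, x + y⟫ ^ 2) (⟪a j, x - y⟫ ^ 2) := by
  rw [EuclideanSpace.norm_sq_eq]
  refine Finset.sum_congr rfl fun j _ => ?_
  rw [inner_add_right, inner_sub_right, ← abs_sub_abs_sq]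
  simp [PhiMap]

theorem inner_vec2 (a b c d : ℝ) : ⟪vec2 a b, vec2 c d⟫ = a * c + b * d := by
  simp [vec2, PiLp.inner_apply, Fin.sum_univ_two]; ring

theorem norm_vec2_sq (a b : ℝ) : ‖vec2 a b‖ ^ 2 = a ^ 2 + b ^ 2 := by
  rw [EuclideanSpace.norm_sq_eq]; simp [vec2, Fin.sum_univ_two]

theorem polar (x : E2) : ∃ r φ : ℝ, 0 ≤ r ∧ x = vec2 (r * cos φ) (r * sin φ) ∧ ‖x‖ = r := by
  have hx : x = vec2 (‖(⟨x 0, x 1⟩ : ℂ)‖ * cos (Complex.arg ⟨x 0, x 1⟩))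
      (‖(⟨x 0, x 1⟩ : ℂ)‖ * sin (Complex.arg ⟨x 0, x 1⟩)) := by
    rw [Complex.norm_mul_cos_arg, Complex.norm_mul_sin_arg]
    ext i; fin_cases i <;> simp [vec2]
  refine ⟨_, _, norm_nonneg _, hx, ?_⟩
  have : ‖x‖ ^ 2 = ‖(⟨x 0, x 1⟩ : ℂ)‖ ^ 2 := by
    rw [Complex.sq_norm, EuclideanSpace.norm_sq_eq]
    simp [Fin.sum_univ_two, Complex.normSq]; ring
  exact (pow_left_inj₀ (norm_nonneg _) (norm_nonneg _) two_ne_zero).1 this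

theorem inner_polar (r s α φ : ℝ) :
    ⟪vec2 (r * cos α) (r * sin α), vec2 (s * cos φ) (s * sin φ)⟫ = r * s * cos (α - φ) := by
  rw [inner_vec2, cos_sub]; ring

/-- sorted version of the polygon inequality -/
theorem key_sorted {m : ℕ} (hm : 1 ≤ m) (w : Fin m → ℝ) (hw : ∀ j, 0 ≤ w j) (t : Fin m → ℝ)
    (ht : Monotone t) (h0 : ∀ j, 0 ≤ t j) (h1 : ∀ j, t j < π) (D : ℝ)
    (hD : ∀ ψ, ∑ j, w j * |cos (t j - ψ)| ≤ D) :
    ∑ j, w j ≤ D * (m * sin (π / (2 * m))) := by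
  have hm0 : 0 < m := hm
  set T : ℕ → ℝ := fun k => if h : k < m then t ⟨k, h⟩ else t ⟨0, hm⟩ + π with hT
  have Tlt : ∀ k (h : k < m), T k = t ⟨k, h⟩ := fun k h => by simp [hT, h]
  have Tm : T m = t ⟨0, hm⟩ + π := by simp [hT]
  have T0 : T 0 = t ⟨0, hm⟩ := Tlt 0 hm
  have Tmono : ∀ i j, i ≤ j → j ≤ m → T i ≤ T j := by
    intro i j hij hj
    rcases hj.lt_or_eq with h | h
    · rw [Tlt i (by omega), Tlt j h]; exact ht (by simpa using hij)
    · subst h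
      rcases hij.lt_or_eq with h | h
      · rw [Tlt i h, Tm]; linarith [h1 ⟨i, h⟩, h0 ⟨0, hm⟩]
      · rw [h]
  have hDnn : 0 ≤ D := le_trans (Finset.sum_nonneg fun j _ => mul_nonneg (hw j) (abs_nonneg _)) (hD 0)
  have Tup : ∀ i j, i ≤ m → j ≤ m → T i ≤ T j + π := by
    intro i j hi hj
    have := Tmono i m hi le_rfl
    have := Tmono 0 j (Nat.zero_le _) hj
    linarith [Tm, T0]
  -- the weights
  set c : ℕ → ℝ := fun k => sin ((T (k + 1) - T k) / 2) with hc
  have hcnn : ∀ k < m, 0 ≤ c k := by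
    intro k hk
    apply sin_nonneg_of_nonneg_of_le_pi
    · linarith [Tmono k (k + 1) (by omega) (by omega)]
    · linarith [Tup (k + 1) k (by omega) (by omega), pi_pos]
  have tel : ∀ j : Fin m, ∑ k ∈ Finset.range m,
      c k * |cos (t j - ((T (k + 1) + T k) / 2 + π / 2))| = 1 := by
    intro j
    set g : ℕ → ℝ := fun k => cos (T k - t j) with hg
    set h : ℕ → ℝ := fun k => if k ≤ j then g k else 2 - g k with hh
    have Tj : T j = t j := Tlt j j.2
    have gj : g j = 1 := by simp [hg, Tj]
    have e : ∀ k ∈ Finset.range m, c k * |cos (t j - ((T (k + 1) + T k) / 2 + π / 2))| =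
        (h (k + 1) - h k) / 2 := by
      intro k hk
      rw [Finset.mem_range] at hk
      have hjm : (j : ℕ) ≤ m := j.2.le
      have hgg : c k * sin ((T (k + 1) + T k) / 2 - t j) = (g k - g (k + 1)) / 2 := by
        simp only [hg, hc]
        rw [cos_sub_cos]
        have e1 : (T k - t j + (T (k + 1) - t j)) / 2 = (T (k + 1) + T k) / 2 - t j := by ring
        have e2 : (T k - t j - (T (k + 1) - t j)) / 2 = - ((T (k + 1) - T k) / 2) := by ring
        rw [e1, e2, sin_neg]; ring
      have hcs : cos (t j - ((T (k + 1) + T k) / 2 + π / 2)) =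
          - sin ((T (k + 1) + T k) / 2 - t j) := by
        rw [show t j - ((T (k + 1) + T k) / 2 + π / 2) =
          -(((T (k + 1) + T k) / 2 - t j) + π / 2) by ring, cos_neg, cos_add_pi_div_two]
      rw [hcs, abs_neg]
      rcases lt_or_ge k (j : ℕ) with hkj | hkj
      · have a1 := Tmono k j hkj.le hjm
        have a2 := Tmono (k + 1) j hkj hjm
        have a3 := Tup j k hjm hk.le
        have a4 := Tup j (k + 1) hjm hk
        rw [Tj] at a1 a2 a3 a4
        rw [abs_of_nonpos (sin_nonpos_of_nonpos_of_neg_pi_le (by linarith) (by linarith)), mul_neg, hgg]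
        have b1 : h k = g k := by simp only [hh]; rw [if_pos hkj.le]
        have b2 : h (k + 1) = g (k + 1) := by simp only [hh]; rw [if_pos (Nat.succ_le_of_lt hkj)]
        rw [b1, b2]; ring
      · have a1 := Tmono j k hkj hk.le
        have a2 := Tmono j (k + 1) (by omega) hk
        have a3 := Tup k j hk.le hjm
        have a4 := Tup (k + 1) j hk hjm
        rw [Tj] at a1 a2 a3 a4
        rw [abs_of_nonneg (sin_nonneg_of_nonneg_of_le_pi (by linarith) (by linarith)), hgg]
        have b2 : h (k + 1) = 2 - g (k + 1) := by simp only [hh]; rw [if_neg (by omega)]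
        have b1 : h k = 2 - g k := by
          simp only [hh]
          split_ifs with h3
          · have : k = j := by omega
            rw [this, gj]; norm_num
          · rfl
        rw [b1, b2]; ring
    rw [Finset.sum_congr rfl e, ← Finset.sum_div, Finset.sum_range_sub]
    have b0 : h 0 = g 0 := by simp [hh]
    have bm : h m = 2 - g m := by simp only [hh]; rw [if_neg (by have := j.2; omega)]
    have : g m = - g 0 := by
      simp only [hg]; rw [Tm, T0, show t ⟨0, hm⟩ + π - t j = (t ⟨0, hm⟩ - t j) + π by ring, cos_add_pi]
    rw [b0, bm, this]; ring
  have hsum : ∑ k ∈ Finset.range m, c k ≤ m * sin (π / (2 * m)) := by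
    have hconc : ConcaveOn ℝ (Set.Icc 0 π) sin := strictConcaveOn_sin_Icc.concaveOn
    have := hconc.le_map_sum (t := Finset.range m) (w := fun _ => (1 / m : ℝ))
      (p := fun k => (T (k + 1) - T k) / 2) (fun _ _ => by positivity)
      (by simp; field_simp) (by
        intro k hk
        rw [Finset.mem_range] at hk
        constructor
        · linarith [Tmono k (k + 1) (by omega) (by omega)]
        · linarith [Tup (k + 1) k (by omega) (by omega), pi_pos])
    simp only [smul_eq_mul, ← Finset.mul_sum, ← Finset.sum_div, Finset.sum_range_sub] at this
    rw [Tm, T0] at this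
    have e : (1 / m : ℝ) * ((t ⟨0, hm⟩ + π - t ⟨0, hm⟩) / 2) = π / (2 * m) := by
      field_simp; ring
    rw [e] at this
    have hmp : (0 : ℝ) < m := by exact_mod_cast hm0
    rw [one_div, inv_mul_le_iff₀ hmp] at this
    exact this
  calc ∑ j, w j = ∑ j, w j * ∑ k ∈ Finset.range m,
        c k * |cos (t j - ((T (k + 1) + T k) / 2 + π / 2))| := by simp [tel]
    _ = ∑ k ∈ Finset.range m, c k * ∑ j, w j * |cos (t j - ((T (k + 1) + T k) / 2 + π / 2))| := by
        simp only [Finset.mul_sum]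
        rw [Finset.sum_comm]
        refine Finset.sum_congr rfl fun _ _ => Finset.sum_congr rfl fun _ _ => by ring
    _ ≤ ∑ k ∈ Finset.range m, c k * D :=
        Finset.sum_le_sum fun k hk => mul_le_mul_of_nonneg_left (hD _) (hcnn k (Finset.mem_range.1 hk))
    _ = D * ∑ k ∈ Finset.range m, c k := by rw [← Finset.sum_mul, mul_comm]
    _ ≤ _ := mul_le_mul_of_nonneg_left hsum hDnn

theorem key {m : ℕ} (hm : 1 ≤ m) (w : Fin m → ℝ) (hw : ∀ j, 0 ≤ w j) (t : Fin m → ℝ) (D : ℝ)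
    (hD : ∀ ψ, ∑ j, w j * |cos (t j - ψ)| ≤ D) :
    ∑ j, w j ≤ D * (m * sin (π / (2 * m))) := by
  set s : Fin m → ℝ := fun j => t j - ⌊t j / π⌋ * π with hs
  have hcos : ∀ j ψ, |cos (s j - ψ)| = |cos (t j - ψ)| := by
    intro j ψ
    have : s j - ψ = (t j - ψ) - ⌊t j / π⌋ * π := by simp only [hs]; ring
    rw [this, cos_sub_int_mul_pi, abs_mul, abs_zpow]; simp
  set σ := Tuple.sort s
  have := key_sorted hm (w ∘ σ) (fun j => hw _) (s ∘ σ) (Tuple.monotone_sort s)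
    (fun j => by
      simp only [hs, Function.comp]
      have := Int.floor_le (t (σ j) / π)
      rw [le_div_iff₀ pi_pos] at this; linarith)
    (fun j => by
      simp only [hs, Function.comp]
      have := Int.lt_floor_add_one (t (σ j) / π)
      rw [div_lt_iff₀ pi_pos] at this; linarith) D
    (fun ψ => by
      refine le_trans (le_of_eq ?_) (hD ψ)
      simp only [Function.comp, hcos]
      exact Equiv.sum_comp σ (fun j => w j * |cos (t j - ψ)|))
  rwa [show ∑ j, (w ∘ σ) j = ∑ j, w j from Equiv.sum_comp σ w] at this

theorem sum_abs_cos {m : ℕ} (hm : 1 ≤ m) (ψ : ℝ) :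
    ∑ j : Fin m, |cos (((j : ℕ) + 1) * π / m - ψ)| ≤ 1 / sin (π / (2 * m)) := by
  have hmp : (0 : ℝ) < m := by exact_mod_cast hm
  have hspos : 0 < sin (π / (2 * m)) := by
    apply sin_pos_of_pos_of_lt_pi (by positivity)
    rw [div_lt_iff₀ (by positivity)]
    have : (1 : ℝ) ≤ m := by exact_mod_cast hm
    nlinarith [pi_pos]
  rw [le_div_iff₀ hspos, Finset.sum_mul]
  rw [Fin.sum_univ_eq_sum_range (fun j : ℕ => |cos (((j : ℕ) + 1) * π / m - ψ)| * sin (π / (2 * m))) m]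
  set X : ℕ → ℝ := fun k => k * π / m + (π / (2 * m) - ψ) with hX
  have hint : ∀ a b : ℝ, IntervalIntegrable (fun x => |cos x|) MeasureTheory.volume a b :=
    fun a b => (continuous_cos.abs).intervalIntegrable a b
  have hstep : ∀ k, |cos (((k : ℕ) + 1) * π / m - ψ)| * sin (π / (2 * m)) ≤
      (∫ x in X k..X (k + 1), |cos x|) / 2 := by
    intro k
    have hle : X k ≤ X (k + 1) := by
      simp only [hX]; push_cast
      have : (k : ℝ) * π / m ≤ (k + 1) * π / m := by gcongr; linarith
      linarith
    have h2 := intervalIntegral.abs_integral_le_integral_abs (f := cos) hle (μ := MeasureTheory.volume)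
    rw [integral_cos, sin_sub_sin] at h2
    have e1 : (X (k + 1) - X k) / 2 = π / (2 * m) := by
      simp only [hX]; push_cast; field_simp; ring
    have e2 : (X (k + 1) + X k) / 2 = (k + 1) * π / m - ψ := by
      simp only [hX]; push_cast; field_simp; ring
    rw [e1, e2, abs_mul, abs_mul, abs_of_pos hspos] at h2
    norm_num at h2
    linarith
  refine (Finset.sum_le_sum fun k _ => hstep k).trans ?_
  rw [← Finset.sum_div, intervalIntegral.sum_integral_adjacent_intervals (fun k _ => hint _ _)]
  have hper : Function.Periodic (fun x => |cos x|) π := fun x => by simp [cos_add_pi]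
  have e3 : X m = X 0 + π := by simp only [hX]; push_cast; field_simp; ring
  rw [e3, hper.intervalIntegral_add_eq (X 0) (-(π / 2))]
  have e4 : (∫ x in (-(π / 2))..(-(π / 2) + π), |cos x|) = ∫ x in (-(π / 2))..(-(π / 2) + π), cos x := by
    apply intervalIntegral.integral_congr
    intro x hx
    rw [Set.uIcc_of_le (by linarith [pi_pos])] at hx
    exact abs_of_nonneg (cos_nonneg_of_mem_Icc ⟨hx.1, by linarith [hx.2]⟩)
  rw [e4, integral_cos, show -(π / 2) + π = π / 2 by ring]
  simp

theorem S_gt {m : ℕ} (hm : 3 ≤ m) : 0 < sin (π / (2 * m)) ∧ 1 < m * sin (π / (2 * m)) := by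
  have hm3 : (3 : ℝ) ≤ m := by exact_mod_cast hm
  have hmp : (0 : ℝ) < m := by linarith
  have h := mul_lt_sin (x := π / (2 * m)) (by positivity) (by
    rw [div_lt_div_iff₀ (by positivity) (by positivity)]; nlinarith [pi_pos])
  have e : 2 / π * (π / (2 * m)) = 1 / m := by field_simp
  rw [e] at h
  refine ⟨lt_trans (by positivity) h, ?_⟩
  rw [div_lt_iff₀ hmp] at h
  linarith

theorem bdd {m : ℕ} (a : Fin m → E2) : BddAbove (ratioSet a) := by
  refine ⟨√(∑ j, ‖a j‖ ^ 2), ?_⟩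
  rintro r ⟨x, y, hxy, rfl⟩
  have hp : 0 ≤ pdist x y := le_min (norm_nonneg _) (norm_nonneg _)
  have hp' : 0 < pdist x y := lt_of_le_of_ne hp hxy.symm
  rw [div_le_iff₀ hp']
  apply le_of_sq_le_sq _ (by positivity)
  rw [mul_pow, Real.sq_sqrt (by positivity), phi_sq, Finset.sum_mul]
  refine Finset.sum_le_sum fun j _ => ?_
  have cs : ∀ u : E2, ⟪a j, u⟫ ^ 2 ≤ ‖a j‖ ^ 2 * ‖u‖ ^ 2 := fun u => by
    rw [← mul_pow, ← sq_abs]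
    exact pow_le_pow_left₀ (abs_nonneg _) (abs_real_inner_le_norm _ _) 2
  unfold pdist
  rcases le_total ‖x - y‖ ‖x + y‖ with h | h
  · rw [min_eq_left h]; exact (min_le_right _ _).trans (cs _)
  · rw [min_eq_right h]; exact (min_le_left _ _).trans (cs _)

theorem bddb {m : ℕ} (a : Fin m → E2) : BddBelow (ratioSet a) := by
  refine ⟨0, ?_⟩
  rintro r ⟨x, y, hxy, rfl⟩
  exact div_nonneg (norm_nonneg _) (le_min (norm_nonneg _) (norm_nonneg _))

theorem mem_ratio {m : ℕ} (a : Fin m → E2) (u v : E2) (hu : ‖u‖ = 1) (hv : ‖v‖ = 1) :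
    √(∑ j, min (⟪a j, u⟫ ^ 2) (⟪a j, v⟫ ^ 2)) ∈ ratioSet a := by
  have e1 : (1 / 2 : ℝ) • (u + v) + (1 / 2 : ℝ) • (u - v) = u := by module
  have e2 : (1 / 2 : ℝ) • (u + v) - (1 / 2 : ℝ) • (u - v) = v := by module
  have hp : pdist ((1 / 2 : ℝ) • (u + v)) ((1 / 2 : ℝ) • (u - v)) = 1 := by
    rw [pdist, e1, e2, hu, hv, min_self]
  refine ⟨(1 / 2 : ℝ) • (u + v), (1 / 2 : ℝ) • (u - v), by rw [hp]; norm_num, ?_⟩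
  rw [hp, div_one, ← Real.sqrt_sq (norm_nonneg (PhiMap a _ - _)), phi_sq, e1, e2]

theorem norm_unit (φ : ℝ) : ‖vec2 (1 * cos φ) (1 * sin φ)‖ = 1 := by
  have := norm_vec2_sq (1 * cos φ) (1 * sin φ)
  rw [one_mul, one_mul, cos_sq_add_sin_sq] at this
  rw [one_mul, one_mul]
  exact (pow_eq_one_iff_of_nonneg (norm_nonneg _) two_ne_zero).1 this

theorem min_cos_sin (r α φ : ℝ) :
    min ((r * 1 * cos (α - φ)) ^ 2) ((r * 1 * cos (α - (φ + π / 2))) ^ 2) =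
      (r ^ 2 - r ^ 2 * |cos (2 * α - 2 * φ)|) / 2 := by
  rw [show α - (φ + π / 2) = (α - φ) - π / 2 by ring, cos_sub_pi_div_two,
    show 2 * α - 2 * φ = 2 * (α - φ) by ring]
  have h1 := cos_two_mul (α - φ)
  have h2 := sin_sq_add_cos_sq (α - φ)
  have hr := sq_nonneg r
  rcases le_total 0 (cos (2 * (α - φ))) with h | h
  · rw [abs_of_nonneg h, min_eq_right (by simp only [mul_pow]; apply mul_le_mul_of_nonneg_left _ (by positivity); nlinarith), h1]
    linear_combination r ^ 2 * h2
  · rw [abs_of_nonpos h, min_eq_left (by simp only [mul_pow]; apply mul_le_mul_of_nonneg_left _ (by positivity); nlinarith), h1]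
    ring

theorem lipU_lower {m : ℕ} (a : Fin m → E2) : ∑ j, ‖a j‖ ^ 2 ≤ 2 * lipU a ^ 2 ∧ 0 ≤ lipU a := by
  have key : ∀ φ, ∑ j, ⟪a j, vec2 (1 * cos φ) (1 * sin φ)⟫ ^ 2 ≤ lipU a ^ 2 ∧ 0 ≤ lipU a := by
    intro φ
    have := le_csSup (bdd a) (mem_ratio a _ _ (norm_unit φ) (norm_unit φ))
    simp only [min_self] at this
    have h0 : 0 ≤ lipU a := (Real.sqrt_nonneg _).trans this
    refine ⟨?_, h0⟩
    exact (Real.sqrt_le_left h0).1 this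
  refine ⟨?_, (key 0).2⟩
  have h1 := (key 0).1
  have h2 := (key (π / 2)).1
  rw [two_mul]
  refine le_trans (le_of_eq ?_) (add_le_add h1 h2)
  rw [← Finset.sum_add_distrib]
  refine Finset.sum_congr rfl fun j _ => ?_
  obtain ⟨r, α, hr, hx, hn⟩ := polar (a j)
  rw [hn, hx, inner_polar, inner_polar, cos_sub_pi_div_two, sub_zero]
  linear_combination -r ^ 2 * sin_sq_add_cos_sq α

theorem lower {m : ℕ} (hm : 3 ≤ m) (a : Fin m → E2) (hL : lipL a ≠ 0) :
    1 / √(1 - 1 / (m * sin (π / (2 * m)))) ≤ lipU a / lipL a := by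
  obtain ⟨hs, hS⟩ := S_gt hm
  have hL0 : 0 ≤ lipL a := Real.sInf_nonneg fun r hr => by
    obtain ⟨x, y, hxy, rfl⟩ := hr
    exact div_nonneg (norm_nonneg _) (le_min (norm_nonneg _) (norm_nonneg _))
  have hLpos : 0 < lipL a := lt_of_le_of_ne hL0 hL.symm
  choose r α hr hx hn using fun j => polar (a j)
  obtain ⟨hU, hU0⟩ := lipU_lower a
  set P := ∑ j, ‖a j‖ ^ 2 with hP
  have hF : ∀ ψ, ∑ j, r j ^ 2 * |cos (2 * α j - ψ)| ≤ P - 2 * lipL a ^ 2 := by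
    intro ψ
    have h := csInf_le (bddb a) (mem_ratio a _ _ (norm_unit (ψ / 2)) (norm_unit (ψ / 2 + π / 2)))
    have h2 := (Real.le_sqrt' hLpos).1 h
    have e : ∀ j, min (⟪a j, vec2 (1 * cos (ψ / 2)) (1 * sin (ψ / 2))⟫ ^ 2)
        (⟪a j, vec2 (1 * cos (ψ / 2 + π / 2)) (1 * sin (ψ / 2 + π / 2))⟫ ^ 2) =
        (r j ^ 2 - r j ^ 2 * |cos (2 * α j - ψ)|) / 2 := by
      intro j
      rw [hx j, inner_polar, inner_polar, min_cos_sin]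
      congr 5; ring
    simp only [e] at h2
    rw [← Finset.sum_div, Finset.sum_sub_distrib] at h2
    have hPr : ∑ j, r j ^ 2 = P := by simp [hP, hn]
    rw [hPr] at h2
    linarith
  have hk := key (by omega) (fun j => r j ^ 2) (fun j => sq_nonneg _) (fun j => 2 * α j) _ hF
  have hPr : ∑ j, r j ^ 2 = P := by simp [hP, hn]
  rw [hPr] at hk
  set S := m * sin (π / (2 * m)) with hSdef
  have hSp : 0 < S := by linarith
  have hK : 0 < 1 - 1 / S := by
    rw [sub_pos, div_lt_one hSp]; exact hS
  rw [div_le_div_iff₀ (Real.sqrt_pos.2 hK) hLpos, one_mul]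
  apply le_of_sq_le_sq _ (by positivity)
  rw [mul_pow, Real.sq_sqrt hK.le]
  have : P / S ≤ P - 2 * lipL a ^ 2 := by rw [div_le_iff₀ hSp]; exact hk
  have h3 : 2 * lipL a ^ 2 ≤ P * (1 - 1 / S) := by
    have : P * (1 - 1 / S) = P - P / S := by ring
    linarith
  nlinarith

theorem min_cos_ge (α φ χ : ℝ) :
    1 / 2 + (cos (2 * α - 2 * φ) + cos (2 * α - 2 * χ)) / 4
      - |cos (2 * α - (φ + χ + π / 2))| / 2 ≤ min (cos (α - φ) ^ 2) (cos (α - χ) ^ 2) := by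
  have h1 := cos_two_mul (α - φ)
  have h2 := cos_two_mul (α - χ)
  rw [show 2 * (α - φ) = 2 * α - 2 * φ by ring] at h1
  rw [show 2 * (α - χ) = 2 * α - 2 * χ by ring] at h2
  have h3 : |cos (2 * α - 2 * φ) - cos (2 * α - 2 * χ)| ≤
      2 * |cos (2 * α - (φ + χ + π / 2))| := by
    rw [cos_sub_cos, show (2 * α - 2 * φ + (2 * α - 2 * χ)) / 2 = 2 * α - (φ + χ) by ring,
      show 2 * α - (φ + χ + π / 2) = 2 * α - (φ + χ) - π / 2 by ring, cos_sub_pi_div_two,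
      abs_mul, abs_mul]
    norm_num
    exact mul_le_of_le_one_right (by positivity) (abs_sin_le_one _)
  have h4 := abs_le.1 h3
  apply le_min <;> linarith [h4.1, h4.2]

theorem upper {m : ℕ} (hm : 3 ≤ m)
    (ε : Fin m → ℝ) (hε : ∀ j, ε j = 1 ∨ ε j = -1)
    (hzero : ∑ j : Fin m, (ε j : ℂ) * Complex.exp (π * Complex.I / m) ^ ((j : ℕ) + 1) = 0)
    (a : Fin m → E2)
    (ha : ∀ j, a j = if ε j = 1 then
        vec2 (Real.cos (((j : ℕ) + 1) * π / (2 * m))) (Real.sin (((j : ℕ) + 1) * π / (2 * m)))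
      else
        vec2 (Real.cos (((j : ℕ) + 1) * π / (2 * m) + π / 2))
          (Real.sin (((j : ℕ) + 1) * π / (2 * m) + π / 2))) :
    condNum a ≤ ENNReal.ofReal (1 / √(1 - 1 / (m * Real.sin (π / (2 * m))))) := by
  obtain ⟨hs, hS⟩ := S_gt hm
  have hmp : (0 : ℝ) < m := by exact_mod_cast (by omega : 0 < m)
  set s := sin (π / (2 * m)) with hsdef
  have hK : 0 < 1 - 1 / (m * s) := by
    rw [sub_pos, div_lt_one (by linarith)]; exact hS
  set α : Fin m → ℝ := fun j => if ε j = 1 then ((j : ℕ) + 1) * π / (2 * m) else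
    ((j : ℕ) + 1) * π / (2 * m) + π / 2 with hα
  have haα : ∀ j, a j = vec2 (1 * cos (α j)) (1 * sin (α j)) := by
    intro j
    rw [ha j]; simp only [hα]; split_ifs <;> simp
  have hcos : ∀ j ψ, cos (2 * α j - ψ) = ε j * cos (((j : ℕ) + 1) * π / m - ψ) := by
    intro j ψ
    simp only [hα]
    rcases hε j with h | h
    · rw [if_pos h, h, one_mul]; congr 1; field_simp
    · rw [if_neg (by rw [h]; norm_num), h,
        show 2 * (((j : ℕ) + 1) * π / (2 * m) + π / 2) - ψ = (((j : ℕ) + 1) * π / m - ψ) + π by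
          field_simp; ring, cos_add_pi]
      ring
  have hz : ∀ j : Fin m, (ε j : ℂ) * Complex.exp (π * Complex.I / m) ^ ((j : ℕ) + 1) =
      ⟨ε j * cos (((j : ℕ) + 1) * π / m), ε j * sin (((j : ℕ) + 1) * π / m)⟩ := by
    intro j
    rw [← Complex.exp_nat_mul, show (((j : ℕ) + 1 : ℕ) : ℂ) * (π * Complex.I / m) =
      (((((j : ℕ) + 1) * π / m : ℝ)) : ℂ) * Complex.I by push_cast; ring]
    apply Complex.ext
    · rw [Complex.re_ofReal_mul, Complex.exp_ofReal_mul_I_re]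
    · rw [Complex.im_ofReal_mul, Complex.exp_ofReal_mul_I_im]
  simp only [hz] at hzero
  have hre : ∑ j : Fin m, ε j * cos (((j : ℕ) + 1) * π / m) = 0 := by
    have := congrArg Complex.re hzero
    simpa using this
  have him : ∑ j : Fin m, ε j * sin (((j : ℕ) + 1) * π / m) = 0 := by
    have := congrArg Complex.im hzero
    simpa using this
  have hsum : ∀ ψ, ∑ j, cos (2 * α j - ψ) = 0 := by
    intro ψ
    have : ∀ j, cos (2 * α j - ψ) = cos ψ * (ε j * cos (((j : ℕ) + 1) * π / m)) +
        sin ψ * (ε j * sin (((j : ℕ) + 1) * π / m)) := by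
      intro j; rw [hcos, cos_sub]; ring
    simp only [this]
    rw [Finset.sum_add_distrib, ← Finset.mul_sum, ← Finset.mul_sum, hre, him]; simp
  have habs : ∀ ψ, ∑ j, |cos (2 * α j - ψ)| ≤ 1 / s := by
    intro ψ
    refine le_trans (le_of_eq ?_) (sum_abs_cos (by omega : 1 ≤ m) ψ)
    refine Finset.sum_congr rfl fun j _ => ?_
    rw [hcos, abs_mul]
    rcases hε j with h | h <;> rw [h] <;> simp
  have hcosq : ∀ φ, ∑ j, cos (α j - φ) ^ 2 = m / 2 := by
    intro φ
    have : ∀ j, cos (α j - φ) ^ 2 = 1 / 2 + cos (2 * α j - 2 * φ) / 2 := by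
      intro j
      have h1 := cos_two_mul (α j - φ)
      rw [show 2 * (α j - φ) = 2 * α j - 2 * φ by ring] at h1
      linarith
    simp only [this]
    rw [Finset.sum_add_distrib, ← Finset.sum_div, ← Finset.sum_div, hsum]; simp
  have hcomp : ∀ x y : E2, pdist x y ^ 2 * ((m - 1 / s) / 2) ≤ ‖PhiMap a x - PhiMap a y‖ ^ 2 ∧
      ‖PhiMap a x - PhiMap a y‖ ^ 2 ≤ pdist x y ^ 2 * (m / 2) := by
    intro x y
    rw [phi_sq]
    unfold pdist
    obtain ⟨ρ, φ, hρ, hx, hxn⟩ := polar (x + y)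
    obtain ⟨σ, χ, hσ, hy, hyn⟩ := polar (x - y)
    have e : ∀ j, min (⟪a j, x + y⟫ ^ 2) (⟪a j, x - y⟫ ^ 2) =
        min (ρ ^ 2 * cos (α j - φ) ^ 2) (σ ^ 2 * cos (α j - χ) ^ 2) := by
      intro j
      rw [haα, hx, hy, inner_polar, inner_polar]; congr 1 <;> ring
    simp only [e]
    rw [hxn, hyn]
    have hmn : 0 ≤ min σ ρ := le_min hσ hρ
    constructor
    · calc min σ ρ ^ 2 * ((m - 1 / s) / 2) ≤ min σ ρ ^ 2 * ∑ j, (1 / 2 +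
            (cos (2 * α j - 2 * φ) + cos (2 * α j - 2 * χ)) / 4
            - |cos (2 * α j - (φ + χ + π / 2))| / 2) := by
            apply mul_le_mul_of_nonneg_left _ (sq_nonneg _)
            rw [Finset.sum_sub_distrib, Finset.sum_add_distrib, ← Finset.sum_div, ← Finset.sum_div, ← Finset.sum_div,
              Finset.sum_add_distrib, hsum, hsum]
            have := habs (φ + χ + π / 2)
            simp only [Finset.sum_const, Finset.card_univ, Fintype.card_fin, nsmul_eq_mul]
            linarith
        _ ≤ _ := by
            rw [Finset.mul_sum]
            refine Finset.sum_le_sum fun j _ => ?_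
            refine (mul_le_mul_of_nonneg_left (min_cos_ge (α j) φ χ) (sq_nonneg _)).trans ?_
            apply le_min
            · exact mul_le_mul (pow_le_pow_left₀ hmn (min_le_right _ _) 2) (min_le_left _ _)
                (le_min (sq_nonneg _) (sq_nonneg _)) (sq_nonneg _)
            · exact mul_le_mul (pow_le_pow_left₀ hmn (min_le_left _ _) 2) (min_le_right _ _)
                (le_min (sq_nonneg _) (sq_nonneg _)) (sq_nonneg _)
    · rcases le_total σ ρ with h | h
      · rw [min_eq_left h, ← hcosq χ, Finset.mul_sum]
        exact Finset.sum_le_sum fun j _ => min_le_right _ _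
      · rw [min_eq_right h, ← hcosq φ, Finset.mul_sum]
        exact Finset.sum_le_sum fun j _ => min_le_left _ _
  have hne : (ratioSet a).Nonempty := ⟨_, mem_ratio a _ _ (norm_unit 0) (norm_unit 0)⟩
  have hKm : (m - 1 / s) / 2 = (m / 2) * (1 - 1 / (m * s)) := by field_simp
  have hpos : ∀ x y : E2, pdist x y ≠ 0 → 0 < pdist x y := fun x y h =>
    lt_of_le_of_ne (le_min (norm_nonneg _) (norm_nonneg _)) h.symm
  have hL : √((m - 1 / s) / 2) ≤ lipL a := by
    apply le_csInf hne
    rintro r ⟨x, y, hxy, rfl⟩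
    rw [le_div_iff₀ (hpos x y hxy)]
    apply le_of_sq_le_sq _ (norm_nonneg _)
    rw [mul_pow, Real.sq_sqrt (by rw [hKm]; positivity), mul_comm]
    exact (hcomp x y).1
  have hU : lipU a ≤ √(m / 2) := by
    apply csSup_le hne
    rintro r ⟨x, y, hxy, rfl⟩
    have := hpos x y hxy
    rw [div_le_iff₀ this]
    apply le_of_sq_le_sq _ (by positivity)
    rw [mul_pow, Real.sq_sqrt (by positivity), mul_comm]
    exact (hcomp x y).2
  have hLp : 0 < √((m - 1 / s) / 2) := by rw [hKm]; positivity
  unfold condNum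
  rw [if_neg (by linarith)]
  apply ENNReal.ofReal_le_ofReal
  calc lipU a / lipL a ≤ √(m / 2) / √((m - 1 / s) / 2) :=
        div_le_div₀ (by positivity) hU hLp hL
    _ = _ := by
      rw [hKm, Real.sqrt_mul (by positivity)]
      have : 0 < √((m : ℝ) / 2) := by positivity
      field_simp

/-- If `m ≥ 3` has an odd factor and `ε ∈ {±1}^m` satisfies
`∑ ε_j e^{ijπ/m} = 0`, then the frame with `a_j = (cos(jπ/(2m)), sin(jπ/(2m)))` when
`ε_j = 1` and `a_j = (cos(jπ/(2m)+π/2), sin(jπ/(2m)+π/2))` when `ε_j = −1` attains the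
minimal condition number `(1 − 1/(m·sin(π/(2m))))^{−1/2}`. -/
theorem stmt16 {m : ℕ} (hm : 3 ≤ m) (hodd : ∃ k, Odd k ∧ 1 < k ∧ k ∣ m)
    (ε : Fin m → ℝ) (hε : ∀ j, ε j = 1 ∨ ε j = -1)
    (hzero : ∑ j : Fin m, (ε j : ℂ) * Complex.exp (π * Complex.I / m) ^ ((j : ℕ) + 1) = 0)
    (a : Fin m → E2)
    (ha : ∀ j, a j = if ε j = 1 then
        vec2 (Real.cos (((j : ℕ) + 1) * π / (2 * m))) (Real.sin (((j : ℕ) + 1) * π / (2 * m)))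
      else
        vec2 (Real.cos (((j : ℕ) + 1) * π / (2 * m) + π / 2))
          (Real.sin (((j : ℕ) + 1) * π / (2 * m) + π / 2))) :
    condNum a = ⨅ M : Fin m → E2, condNum M ∧
    condNum a = ENNReal.ofReal (1 - 1 / (m * Real.sin (π / (2 * m)))) ^ (-(1 / 2) : ℝ) := by
  obtain ⟨hs, hS⟩ := S_gt hm
  have hmp : (0 : ℝ) < m := by exact_mod_cast (by omega : 0 < m)
  have hK : 0 < 1 - 1 / (m * sin (π / (2 * m))) := by
    rw [sub_pos, div_lt_one (by linarith)]; exact hS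
  have hB : ENNReal.ofReal (1 - 1 / (m * Real.sin (π / (2 * m)))) ^ (-(1 / 2) : ℝ) =
      ENNReal.ofReal (1 / √(1 - 1 / (m * Real.sin (π / (2 * m))))) := by
    rw [ENNReal.ofReal_rpow_of_pos hK, Real.rpow_neg hK.le, ← Real.sqrt_eq_rpow, one_div (√_)]
  have hlow : ∀ M : Fin m → E2,
      ENNReal.ofReal (1 / √(1 - 1 / (m * Real.sin (π / (2 * m))))) ≤ condNum M := by
    intro M
    unfold condNum
    split_ifs with h
    · exact le_top
    · exact ENNReal.ofReal_le_ofReal (lower hm M h)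
  have hup := upper hm ε hε hzero a ha
  have heq := le_antisymm hup (hlow a)
  refine ⟨?_, by rw [hB, heq]⟩
  apply le_antisymm
  · rw [heq]; exact le_iInf hlow
  · exact iInf_le _ a
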